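/- Let s ∈ ℝ and 0 < δ ≤ 1. There exist constants C = C(s, δ, χ, ψ) > 0 and μ = μ(δ) > 0 such that for every T with 0 < T ≤ 1 and every u ∈ 𝒮(ℝ×ℝ²), ‖ψ(t/T) u‖_{X^{s,(1−δ)/2,1}} ≤ C T^μ ‖u‖_{X^{s,1/2,1}}. -/

import Mathlib

/-!
Multiplication by `ψ(t/T)` acts on the space-time Fourier transform as convolution in `τ` with a
kernel of size `O(T ⟨Tτ⟩⁻⁴)` (Fourier inversion for `ψ`; `exists_cutoff_density`,
`enorm_ftt_mul_le`). It does not move the spatial frequencies, so `N` and `M` can be fixed and the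
problem becomes one-dimensional in the modulation `τ - ξ³ - η³`.

Split the input into modulations `L'` and the output into modulations `L`, and put `p = T L`,
`q = T L'`. Schur's test (`schur_test`, `slice_bound`) bounds the norm of the cutoff between these
pieces by a constant times `min(1,p)^(1/2) min(1,q)^(1/2)`, with an additional factor
`(1 + p²)⁻¹` if `p ≥ 8q`, because the two frequency windows are then separated by a distance
comparable to `L`. Minkowski's inequality then gives `PQLnorm_cutoff_le`.

With `b = (1-δ)/2` and `θ = δ/2`, so that `b + θ = 1/2`, this interaction factor `k(p,q)` satisfies
`p^c k(p,q) ≤ 8 q^(c+θ) min(p^(θ/2), p^(-θ/2))` for `0 ≤ c ≤ b` (`rpow_mul_interaction_le`). Since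
`⟨M² + L⟩^b ≤ (1 + M²)^b + L^b`, the cases `c = 0` and `c = b` together bound
`∑_L ⟨M² + L⟩^b k(TL, TL')` by a constant times `T^θ ⟨M² + L'⟩^(1/2)`. Summing over `L'` gives the
theorem with `μ = δ/2`.
-/

noncomputable section

open MeasureTheory
open scoped ENNReal

/-- Space-time Fourier transform `ũ(τ,ξ,η)` of a function `u(t,x,y)`. -/
def ftt (w : ℝ → ℝ → ℝ → ℂ) (τ ξ η : ℝ) : ℂ :=
  ∫ t : ℝ, ∫ x : ℝ, ∫ y : ℝ,
    Complex.exp (-Complex.I * ((t * τ + x * ξ + y * η : ℝ) : ℂ)) * w t x y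

/-- Spatial Fourier transform of a function of `(x, y)`. -/
def fxy2 (f : ℝ → ℝ → ℂ) (ξ η : ℝ) : ℂ :=
  ∫ x : ℝ, ∫ y : ℝ, Complex.exp (-Complex.I * ((x * ξ + y * η : ℝ) : ℂ)) * f x y

/-- `φ(t) = χ(t) - χ(2t)`. -/
def phiCut (χ : ℝ → ℝ) (t : ℝ) : ℝ := χ t - χ (2 * t)

/-- `φ_N(t) = φ(t/N)`. -/
def phiCutD (χ : ℝ → ℝ) (N t : ℝ) : ℝ := phiCut χ (t / N)

/-- Japanese bracket `⟨x⟩ = (1+x²)^{1/2}` raised to the power `s`. -/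
def jbr (x s : ℝ) : ℝ := (1 + x ^ 2) ^ (s / 2)

/-- The `L²_{t,x,y}` norm of the dyadic piece `P_{N,M} Q_L u`, computed on the
Fourier side via Plancherel's theorem. -/
def PQLnorm (χ : ℝ → ℝ) (N M L : ℝ) (w : ℝ → ℝ → ℝ → ℂ) : ℝ≥0∞ :=
  (∫⁻ v : ℝ × ℝ × ℝ,
      ENNReal.ofReal
        ((phiCutD χ N (Real.sqrt (v.2.1 ^ 2 + v.2.2 ^ 2)) *
            phiCutD χ M (v.2.1 + v.2.2) *
            phiCutD χ L (v.1 - v.2.1 ^ 3 - v.2.2 ^ 3)) ^ 2 *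
          ‖ftt w v.1 v.2.1 v.2.2‖ ^ 2)) ^ ((1 : ℝ) / 2)

/-- The Besov-type Bourgain norm `‖u‖_{X^{s,b,1}}`. -/
def Xnorm (χ : ℝ → ℝ) (s b : ℝ) (w : ℝ → ℝ → ℝ → ℂ) : ℝ≥0∞ :=
  (∑' n : ℤ, ∑' m : ℤ,
      (∑' l : ℤ,
          ENNReal.ofReal (jbr ((2 : ℝ) ^ n) s * jbr (((2 : ℝ) ^ m) ^ 2 + (2 : ℝ) ^ l) b) *
            PQLnorm χ ((2 : ℝ) ^ n) ((2 : ℝ) ^ m) ((2 : ℝ) ^ l) w) ^ 2) ^ ((1 : ℝ) / 2)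

/-! ### Integral inequalities -/

theorem lintegral_mul_le_sqrt_mul_sqrt {α : Type*} [MeasurableSpace α] (ν : Measure α)
    {f g : α → ℝ≥0∞} (hf : Measurable f) (hg : Measurable g) :
    ∫⁻ a, f a * g a ∂ν ≤
      (∫⁻ a, f a ^ 2 ∂ν) ^ ((1 : ℝ) / 2) * (∫⁻ a, g a ^ 2 ∂ν) ^ ((1 : ℝ) / 2) := by
  have h := ENNReal.lintegral_mul_le_Lp_mul_Lq ν
    (p := 2) (q := 2) (by constructor <;> norm_num) hf.aemeasurable hg.aemeasurable
  simpa using h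

theorem rpow_half_sq (x : ℝ≥0∞) : (x ^ ((1 : ℝ) / 2)) ^ 2 = x := by
  rw [← ENNReal.rpow_natCast, ← ENNReal.rpow_mul]; norm_num

theorem sq_rpow_half (x : ℝ≥0∞) : (x ^ 2) ^ ((1 : ℝ) / 2) = x := by
  rw [← ENNReal.rpow_natCast, ← ENNReal.rpow_mul]; norm_num

/-- Minkowski's inequality in `L²` for a countable sum, obtained by expanding the square and
applying Cauchy–Schwarz to each product. -/
theorem lintegral_tsum_sq_rpow_le {α ι : Type*} [MeasurableSpace α] [Countable ι] (ν : Measure α)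
    (f : ι → α → ℝ≥0∞) (hf : ∀ i, Measurable (f i)) :
    (∫⁻ a, (∑' i, f i a) ^ 2 ∂ν) ^ ((1 : ℝ) / 2) ≤
      ∑' i, (∫⁻ a, f i a ^ 2 ∂ν) ^ ((1 : ℝ) / 2) := by
  have key : ∫⁻ a, (∑' i, f i a) ^ 2 ∂ν ≤
      (∑' i, (∫⁻ a, f i a ^ 2 ∂ν) ^ ((1 : ℝ) / 2)) ^ 2 := by
    calc ∫⁻ a, (∑' i, f i a) ^ 2 ∂ν
        = ∫⁻ a, ∑' i, ∑' j, f i a * f j a ∂ν := by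
          refine lintegral_congr fun a => ?_
          rw [sq, ← ENNReal.tsum_mul_right]
          exact tsum_congr fun i => ENNReal.tsum_mul_left.symm
      _ = ∑' i, ∑' j, ∫⁻ a, f i a * f j a ∂ν := by
          rw [lintegral_tsum]
          · refine tsum_congr fun i => ?_
            rw [lintegral_tsum]
            exact fun j => ((hf i).mul (hf j)).aemeasurable
          · exact fun i => (Measurable.tsum fun j => (hf i).mul (hf j)).aemeasurable
      _ ≤ ∑' i, ∑' j, (∫⁻ a, f i a ^ 2 ∂ν) ^ ((1 : ℝ) / 2) *
            (∫⁻ a, f j a ^ 2 ∂ν) ^ ((1 : ℝ) / 2) :=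
          ENNReal.tsum_le_tsum fun i => ENNReal.tsum_le_tsum fun j =>
            lintegral_mul_le_sqrt_mul_sqrt ν (hf i) (hf j)
      _ = _ := by
          rw [sq, ← ENNReal.tsum_mul_right]
          exact tsum_congr fun i => ENNReal.tsum_mul_left
  calc _ ≤ ((∑' i, (∫⁻ a, f i a ^ 2 ∂ν) ^ ((1 : ℝ) / 2)) ^ 2) ^ ((1 : ℝ) / 2) :=
        ENNReal.rpow_le_rpow key (by norm_num)
    _ = _ := sq_rpow_half _

/-- Schur's test on `L²(ℝ)` for a nonnegative kernel. -/
theorem schur_test (k : ℝ → ℝ → ℝ≥0∞) (hk : Measurable (Function.uncurry k)) (A B : ℝ≥0∞)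
    (hA : ∀ τ, ∫⁻ σ, k τ σ ≤ A) (hB : ∀ σ, ∫⁻ τ, k τ σ ≤ B)
    (g : ℝ → ℝ≥0∞) (hg : Measurable g) :
    ∫⁻ τ, (∫⁻ σ, k τ σ * g σ) ^ 2 ≤ A * B * ∫⁻ σ, g σ ^ 2 := by
  have hk1 : ∀ τ, Measurable (k τ) := fun τ => hk.comp measurable_prodMk_left
  have hk2 : ∀ σ, Measurable (fun τ => k τ σ) := fun σ => hk.comp measurable_prodMk_right
  have cs : ∀ τ, (∫⁻ σ, k τ σ * g σ) ^ 2 ≤ A * ∫⁻ σ, k τ σ * g σ ^ 2 := by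
    intro τ
    have e1 : ∀ σ, k τ σ * g σ =
        (k τ σ) ^ ((1 : ℝ) / 2) * ((k τ σ) ^ ((1 : ℝ) / 2) * g σ) := by
      intro σ
      rw [← mul_assoc, ← sq, rpow_half_sq]
    have h1 := lintegral_mul_le_sqrt_mul_sqrt volume
      (f := fun σ => (k τ σ) ^ ((1 : ℝ) / 2)) (g := fun σ => (k τ σ) ^ ((1 : ℝ) / 2) * g σ)
      ((hk1 τ).pow_const _) (((hk1 τ).pow_const _).mul hg)
    simp only [← e1, mul_pow, rpow_half_sq] at h1
    calc (∫⁻ σ, k τ σ * g σ) ^ 2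
        ≤ ((∫⁻ σ, k τ σ) ^ ((1 : ℝ) / 2) *
            (∫⁻ σ, k τ σ * g σ ^ 2) ^ ((1 : ℝ) / 2)) ^ 2 := by gcongr
      _ = (∫⁻ σ, k τ σ) * ∫⁻ σ, k τ σ * g σ ^ 2 := by
          rw [mul_pow, rpow_half_sq, rpow_half_sq]
      _ ≤ _ := by gcongr; exact hA τ
  have hm : Measurable (Function.uncurry fun τ σ => k τ σ * g σ ^ 2) :=
    hk.mul ((hg.comp measurable_snd).pow_const 2)
  calc ∫⁻ τ, (∫⁻ σ, k τ σ * g σ) ^ 2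
      ≤ ∫⁻ τ, A * ∫⁻ σ, k τ σ * g σ ^ 2 := lintegral_mono cs
    _ = A * ∫⁻ τ, ∫⁻ σ, k τ σ * g σ ^ 2 := lintegral_const_mul _ hm.lintegral_prod_right'
    _ = A * ∫⁻ σ, ∫⁻ τ, k τ σ * g σ ^ 2 := by
        rw [lintegral_lintegral_swap hm.aemeasurable]
    _ = A * ∫⁻ σ, (∫⁻ τ, k τ σ) * g σ ^ 2 := by
        congr 1
        exact lintegral_congr fun σ => lintegral_mul_const _ (hk2 σ)
    _ ≤ A * ∫⁻ σ, B * g σ ^ 2 := by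
        gcongr with σ
        exact hB σ
    _ = _ := by rw [lintegral_const_mul _ (hg.pow_const 2), mul_assoc]

/-! ### Dyadic cutoffs -/

theorem one_le_tsum_phiCutD {χ : ℝ → ℝ} (hsupp : Function.support χ ⊆ Set.Ioo (-2) 2)
    (hone : ∀ t ∈ Set.Icc (-1 : ℝ) 1, χ t = 1) {x : ℝ} (hx : x ≠ 0) :
    1 ≤ ∑' l : ℤ, ‖phiCutD χ ((2 : ℝ) ^ l) x‖ₑ := by
  obtain ⟨l, hl1, hl2⟩ := exists_mem_Ico_zpow (abs_pos.mpr hx) (by norm_num : (1 : ℝ) < 2)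
  have hpos : (0 : ℝ) < 2 ^ l := by positivity
  rw [zpow_add_one₀ (by norm_num)] at hl2
  have e0 : χ (2 * (x / 2 ^ l)) = 0 := by
    by_contra h
    have := hsupp h
    have h2 : |2 * (x / 2 ^ l)| < 2 := abs_lt.mpr this
    rw [abs_mul, abs_div, abs_of_pos hpos, abs_two] at h2
    have : 1 ≤ |x| / 2 ^ l := by rw [le_div_iff₀ hpos]; linarith
    linarith
  have e1 : χ (x / 2 ^ (l + 1)) = 1 := by
    apply hone
    have : |x / 2 ^ (l + 1)| ≤ 1 := by
      rw [zpow_add_one₀ (by norm_num), abs_div, abs_of_pos (a := (2 : ℝ) ^ l * 2) (by positivity),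
        div_le_one (by positivity)]
      exact hl2.le
    exact abs_le.mp this
  have e2 : 2 * (x / 2 ^ (l + 1)) = x / (2 : ℝ) ^ l := by
    rw [zpow_add_one₀ (by norm_num)]; field_simp
  have hsum : phiCutD χ (2 ^ l) x + phiCutD χ (2 ^ (l + 1)) x = 1 := by
    simp only [phiCutD, phiCut]
    rw [e2, e0, e1]; ring
  calc (1 : ℝ≥0∞) = ‖phiCutD χ (2 ^ l) x + phiCutD χ (2 ^ (l + 1)) x‖ₑ := by
        rw [hsum]; simp
    _ ≤ ‖phiCutD χ (2 ^ l) x‖ₑ + ‖phiCutD χ (2 ^ (l + 1)) x‖ₑ := enorm_add_le _ _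
    _ = ∑ j ∈ {l, l + 1}, ‖phiCutD χ ((2 : ℝ) ^ j) x‖ₑ := by
        rw [Finset.sum_pair (by omega)]
    _ ≤ _ := ENNReal.sum_le_tsum _

theorem phiCutD_support {χ : ℝ → ℝ} (hsupp : Function.support χ ⊆ Set.Ioo (-2) 2)
    (hone : ∀ t ∈ Set.Icc (-1 : ℝ) 1, χ t = 1) {L x : ℝ} (hL : 0 < L)
    (h : phiCutD χ L x ≠ 0) : L / 2 ≤ |x| ∧ |x| ≤ 2 * L := by
  have hx : |x| = |x / L| * L := by
    rw [abs_div, abs_of_pos hL]; field_simp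
  rw [hx]
  have zero : ∀ t : ℝ, 2 ≤ |t| → χ t = 0 := by
    intro t ht
    by_contra h
    have := abs_lt.mpr (hsupp h)
    linarith
  constructor
  · by_contra hc
    have h1 : |x / L| < 1 / 2 := by
      by_contra h2
      apply hc
      have := mul_le_mul_of_nonneg_right (not_lt.mp h2) hL.le
      linarith
    have h2 := abs_lt.mp h1
    apply h
    simp only [phiCutD, phiCut]
    rw [hone _ ⟨by linarith, by linarith⟩, hone _ ⟨by linarith, by linarith⟩]; ring
  · by_contra hc
    have h1 : 2 ≤ |x / L| := by
      by_contra h2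
      apply hc
      have := mul_le_mul_of_nonneg_right (not_le.mp h2).le hL.le
      linarith
    apply h
    simp only [phiCutD, phiCut]
    rw [zero _ h1, zero]
    · ring
    · rw [abs_mul, abs_two]; linarith

theorem enorm_phiCutD_le_one {χ : ℝ → ℝ} (h0 : ∀ t, 0 ≤ χ t) (h1 : ∀ t, χ t ≤ 1) (L x : ℝ) :
    ‖phiCutD χ L x‖ₑ ≤ 1 := by
  rw [← enorm_one (G := ℝ), enorm_le_iff_norm_le]
  simp only [phiCutD, phiCut, Real.norm_eq_abs, abs_one]
  rw [abs_le]
  constructor <;> linarith [h0 (x / L), h1 (x / L), h0 (2 * (x / L)), h1 (2 * (x / L))]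

theorem continuous_phiCutD {χ : ℝ → ℝ} (hχ : Continuous χ) (L : ℝ) :
    Continuous (phiCutD χ L) := by
  unfold phiCutD phiCut
  fun_prop

/-! ### Time localization on the Fourier side -/

open scoped FourierTransform in
/-- The cutoff `ψ(t/T)` is a superposition of the characters `exp(iωt)`, with a density of size
`O(T ⟨Tω⟩⁻⁴)`. -/
theorem exists_cutoff_density (ψ : ℝ → ℝ) (hψ : ContDiff ℝ (⊤ : ℕ∞) ψ)
    (hsupp : Function.support ψ ⊆ Set.Icc (-2) 2) :
    ∃ C : ℝ, 0 < C ∧ ∀ T : ℝ, 0 < T → ∃ κ : ℝ → ℂ, Integrable κ ∧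
      (∀ ω, ‖κ ω‖ ≤ C * T / (1 + (T * ω) ^ 2) ^ 2) ∧
      ∀ t, (ψ (t / T) : ℂ) = ∫ ω, Complex.exp (Complex.I * ((ω * t : ℝ) : ℂ)) * κ ω := by
  have hc : HasCompactSupport (fun t => (ψ t : ℂ)) := by
    refine HasCompactSupport.intro (isCompact_Icc (a := (-2 : ℝ)) (b := 2)) fun x hx => ?_
    have : ψ x = 0 := by
      by_contra h
      exact hx (hsupp h)
    simp [this]
  have hs : ContDiff ℝ (⊤ : ℕ∞) (fun t => (ψ t : ℂ)) := Complex.ofRealCLM.contDiff.comp hψ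
  set f : SchwartzMap ℝ ℂ := hc.toSchwartzMap hs with hf
  have hfa : ∀ t, f t = (ψ t : ℂ) := fun t => rfl
  set g : SchwartzMap ℝ ℂ := 𝓕 f with hg
  have hinv : ∀ t, (ψ t : ℂ) =
      ∫ w, Complex.exp (Complex.I * ((2 * Real.pi * w * t : ℝ) : ℂ)) * g w := by
    intro t
    have h1 : 𝓕⁻ g = f := FourierTransform.fourierInv_fourier_eq f
    have h2 : (𝓕⁻ g : SchwartzMap ℝ ℂ) t = f t := by rw [h1]
    rw [SchwartzMap.fourierInv_coe, Real.fourierInv_eq'] at h2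
    rw [← hfa, ← h2]
    refine integral_congr_ae (Filter.Eventually.of_forall fun w => ?_)
    simp only [smul_eq_mul]
    congr 2
    simp
    ring
  obtain ⟨C, hC0, hC⟩ : ∃ C : ℝ, 0 < C ∧ ∀ w, ‖g w‖ ≤ C / (1 + (2 * Real.pi * w) ^ 2) ^ 2 := by
    obtain ⟨a, ha0, ha⟩ := g.decay 0 0
    obtain ⟨b, hb0, hb⟩ := g.decay 4 0
    refine ⟨2 * a + 2 * (2 * Real.pi) ^ 4 * b, by positivity, fun w => ?_⟩
    have h1 := ha w
    have h2 := hb w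
    simp only [norm_iteratedFDeriv_zero, pow_zero, one_mul, Real.norm_eq_abs] at h1 h2
    have h3 : |w| ^ 4 = w ^ 4 := by
      rw [show (4 : ℕ) = 2 * 2 by norm_num, pow_mul, pow_mul, sq_abs]
    rw [h3] at h2
    rw [le_div_iff₀ (by positivity)]
    have h4 : (1 + (2 * Real.pi * w) ^ 2) ^ 2 ≤ 2 + 2 * (2 * Real.pi) ^ 4 * w ^ 4 := by
      nlinarith [sq_nonneg (1 - (2 * Real.pi * w) ^ 2)]
    calc ‖g w‖ * (1 + (2 * Real.pi * w) ^ 2) ^ 2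
        ≤ ‖g w‖ * (2 + 2 * (2 * Real.pi) ^ 4 * w ^ 4) := by gcongr
      _ = 2 * ‖g w‖ + 2 * (2 * Real.pi) ^ 4 * (w ^ 4 * ‖g w‖) := by ring
      _ ≤ _ := by gcongr
  have hpi := Real.pi_pos
  refine ⟨C, hC0, fun T hT => ⟨fun ω => ((T / (2 * Real.pi) : ℝ) : ℂ) * g (T / (2 * Real.pi) * ω),
    ?_, ?_, ?_⟩⟩
  · exact (g.integrable.comp_mul_left' (by positivity)).const_mul _
  · intro ω
    have h := hC (T / (2 * Real.pi) * ω)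
    have e : 2 * Real.pi * (T / (2 * Real.pi) * ω) = T * ω := by field_simp
    rw [e] at h
    rw [norm_mul, Complex.norm_real, Real.norm_eq_abs, abs_of_pos (by positivity)]
    calc T / (2 * Real.pi) * ‖g (T / (2 * Real.pi) * ω)‖
        ≤ T * (C / (1 + (T * ω) ^ 2) ^ 2) := by
          gcongr
          apply div_le_self hT.le
          linarith [Real.pi_gt_three]
      _ = _ := by ring
  · intro t
    rw [hinv]
    have h := Measure.integral_comp_mul_left
      (fun w => Complex.exp (Complex.I * ((2 * Real.pi * w * (t / T) : ℝ) : ℂ)) * g w)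
      (T / (2 * Real.pi))
    have ha : (0 : ℝ) < T / (2 * Real.pi) := by positivity
    calc _ = ((T / (2 * Real.pi) : ℝ) : ℂ) * ∫ ω, Complex.exp (Complex.I *
          ((2 * Real.pi * (T / (2 * Real.pi) * ω) * (t / T) : ℝ) : ℂ)) *
            g (T / (2 * Real.pi) * ω) := by
          rw [h, abs_of_pos (inv_pos.mpr ha), Complex.real_smul, ← mul_assoc, ← Complex.ofReal_mul,
            mul_inv_cancel₀ ha.ne', Complex.ofReal_one, one_mul]
      _ = _ := by
          rw [← integral_const_mul]
          refine integral_congr_ae (Filter.Eventually.of_forall fun w => ?_)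
          have e : 2 * Real.pi * (T / (2 * Real.pi) * w) * (t / T) = w * t := by field_simp
          simp only [e]
          ring

/-- The spatial Fourier transform of a Schwartz function is integrable in time. -/
theorem integrable_fxy2 (u : SchwartzMap (ℝ × ℝ × ℝ) ℂ) (ξ η : ℝ) :
    Integrable (fun t => fxy2 (fun x y => u (t, x, y)) ξ η) := by
  have h0 : Integrable (fun v : ℝ × ℝ × ℝ =>
      Complex.exp (-Complex.I * ((v.2.1 * ξ + v.2.2 * η : ℝ) : ℂ)) * u v) := by
    have : (volume : Measure (ℝ × ℝ)).IsAddHaarMeasure :=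
      Measure.prod.instIsAddHaarMeasure volume volume
    have : (volume : Measure (ℝ × ℝ × ℝ)).IsAddHaarMeasure :=
      Measure.prod.instIsAddHaarMeasure volume volume
    refine (u.integrable (μ := volume)).bdd_mul (c := 1) (by fun_prop) ?_
    refine Filter.Eventually.of_forall fun v => ?_
    rw [Complex.norm_exp]
    simp
  have h1 :=
    (volume_preserving_prodAssoc (α₁ := ℝ) (β₁ := ℝ) (γ₁ := ℝ)).integrable_comp_of_integrable h0
  exact h1.integral_prod_left.integral_prod_left

theorem ftt_eq_integral_fxy2 (θ : ℝ → ℂ) (u : ℝ → ℝ → ℝ → ℂ) (τ ξ η : ℝ) :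
    ftt (fun t x y => θ t * u t x y) τ ξ η =
      ∫ t, Complex.exp (-Complex.I * ((t * τ : ℝ) : ℂ)) * θ t * fxy2 (u t) ξ η := by
  unfold ftt fxy2
  refine integral_congr_ae (Filter.Eventually.of_forall fun t => ?_)
  simp only
  rw [← integral_const_mul]
  refine integral_congr_ae (Filter.Eventually.of_forall fun x => ?_)
  simp only
  rw [← integral_const_mul]
  refine integral_congr_ae (Filter.Eventually.of_forall fun y => ?_)
  simp only
  rw [show -Complex.I * ((t * τ + x * ξ + y * η : ℝ) : ℂ) =
    -Complex.I * ((t * τ : ℝ) : ℂ) + -Complex.I * ((x * ξ + y * η : ℝ) : ℂ) by push_cast; ring,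
    Complex.exp_add]
  ring

/-- Multiplication by a superposition of characters acts on the Fourier side as a convolution in
the time frequency. -/
theorem enorm_ftt_mul_le (u : SchwartzMap (ℝ × ℝ × ℝ) ℂ) (θ κ : ℝ → ℂ) (hκ : Integrable κ)
    (hθ : ∀ t, θ t = ∫ ω, Complex.exp (Complex.I * ((ω * t : ℝ) : ℂ)) * κ ω) (τ ξ η : ℝ) :
    ‖ftt (fun t x y => θ t * u (t, x, y)) τ ξ η‖ₑ ≤
      ∫⁻ σ, ‖κ (τ - σ)‖ₑ * ‖ftt (fun t x y => u (t, x, y)) σ ξ η‖ₑ := by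
  set v : ℝ → ℂ := fun t => fxy2 (fun x y => u (t, x, y)) ξ η with hv
  have hvi : Integrable v := integrable_fxy2 u ξ η
  have hu : ∀ σ, ftt (fun t x y => u (t, x, y)) σ ξ η =
      ∫ t, Complex.exp (-Complex.I * ((t * σ : ℝ) : ℂ)) * v t := by
    intro σ
    have h := ftt_eq_integral_fxy2 (fun _ => 1) (fun t x y => u (t, x, y)) σ ξ η
    simpa using h
  have hint : Integrable (fun p : ℝ × ℝ =>
      Complex.exp (-Complex.I * ((p.1 * (τ - p.2) : ℝ) : ℂ)) * (v p.1 * κ p.2)) := by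
    refine (hvi.mul_prod hκ).bdd_mul (c := 1) (by fun_prop) ?_
    refine Filter.Eventually.of_forall fun p => ?_
    rw [Complex.norm_exp]
    simp
  have hconv : ftt (fun t x y => θ t * u (t, x, y)) τ ξ η =
      ∫ ω, κ ω * ftt (fun t x y => u (t, x, y)) (τ - ω) ξ η := by
    rw [ftt_eq_integral_fxy2 θ (fun t x y => u (t, x, y))]
    calc _ = ∫ t, ∫ ω, Complex.exp (-Complex.I * ((t * (τ - ω) : ℝ) : ℂ)) * (v t * κ ω) := by
          refine integral_congr_ae (Filter.Eventually.of_forall fun t => ?_)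
          simp only
          rw [hθ, mul_assoc, mul_comm (∫ ω, _), ← mul_assoc, ← integral_const_mul]
          refine integral_congr_ae (Filter.Eventually.of_forall fun ω => ?_)
          simp only
          rw [show -Complex.I * ((t * (τ - ω) : ℝ) : ℂ) =
            -Complex.I * ((t * τ : ℝ) : ℂ) + Complex.I * ((ω * t : ℝ) : ℂ) by push_cast; ring,
            Complex.exp_add]
          ring
      _ = ∫ ω, ∫ t, Complex.exp (-Complex.I * ((t * (τ - ω) : ℝ) : ℂ)) * (v t * κ ω) :=
          integral_integral_swap hint
      _ = _ := by
          refine integral_congr_ae (Filter.Eventually.of_forall fun ω => ?_)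
          simp only
          rw [hu, ← integral_const_mul]
          refine integral_congr_ae (Filter.Eventually.of_forall fun t => ?_)
          simp only
          ring
  rw [hconv]
  calc _ ≤ ∫⁻ ω, ‖κ ω * ftt (fun t x y => u (t, x, y)) (τ - ω) ξ η‖ₑ :=
        enorm_integral_le_lintegral_enorm _
    _ = ∫⁻ ω, ‖κ ω‖ₑ * ‖ftt (fun t x y => u (t, x, y)) (τ - ω) ξ η‖ₑ := by
        simp only [enorm_mul]
    _ = _ := by
        rw [← lintegral_sub_left_eq_self _ τ]
        simp

theorem measurable_ftt (u : SchwartzMap (ℝ × ℝ × ℝ) ℂ) :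
    Measurable (fun v : ℝ × ℝ × ℝ => ftt (fun t x y => u (t, x, y)) v.1 v.2.1 v.2.2) := by
  unfold ftt
  have h : StronglyMeasurable (fun p : (((ℝ × ℝ × ℝ) × ℝ) × ℝ) × ℝ =>
      Complex.exp (-Complex.I *
        ((p.1.1.2 * p.1.1.1.1 + p.1.2 * p.1.1.1.2.1 + p.2 * p.1.1.1.2.2 : ℝ) : ℂ)) *
        u (p.1.1.2, p.1.2, p.2)) := by
    apply Continuous.stronglyMeasurable
    have := u.continuous
    fun_prop
  exact h.integral_prod_right'.integral_prod_right'.integral_prod_right'.measurable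

/-! ### Interaction of two modulation scales -/

/-- Off-diagonal decay: the gain `(1 + p²)⁻¹` is available when the (rescaled) output modulation `p`
dominates the input modulation `q`. -/
def offDiag (p q : ℝ) : ℝ := if 8 * q ≤ p then 1 / (1 + p ^ 2) else 1

/-- Up to a constant, a bound for the `L²` operator norm of the time cutoff `ψ(t/T)` between the
pieces of modulation `L' = q/T` (input) and `L = p/T` (output). -/
def interaction (p q : ℝ) : ℝ := offDiag p q * Real.sqrt (min 1 p) * Real.sqrt (min 1 q)

theorem offDiag_nonneg (p q : ℝ) : 0 ≤ offDiag p q := by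
  unfold offDiag
  split_ifs <;> positivity

theorem interaction_nonneg (p q : ℝ) : 0 ≤ interaction p q :=
  mul_nonneg (mul_nonneg (offDiag_nonneg p q) (Real.sqrt_nonneg _)) (Real.sqrt_nonneg _)

/-- The bound by `1` comes from the total mass of the kernel, the bound by `T * L` from its
supremum and the length of the window. -/
theorem setLIntegral_kernel_le {T L : ℝ} (hT : 0 < T) (a y : ℝ) :
    ∫⁻ x in {x : ℝ | |x - a| ≤ 2 * L}, ENNReal.ofReal (T / (1 + (T * (x - y)) ^ 2)) ≤
      ENNReal.ofReal (4 * min 1 (T * L)) := by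
  rw [mul_min_of_nonneg _ _ (by norm_num), ENNReal.ofReal_min]
  refine le_min ?_ ?_
  · have hi : Integrable (fun x : ℝ => T / (1 + (T * (x - y)) ^ 2)) := by
      have h := ((integrable_inv_one_add_sq.comp_mul_left' hT.ne').comp_sub_right y).const_mul T
      simpa [div_eq_mul_inv] using h
    have hv : ∫ x : ℝ, T / (1 + (T * (x - y)) ^ 2) = Real.pi := by
      rw [integral_sub_right_eq_self (fun x : ℝ => T / (1 + (T * x) ^ 2)) y]
      have h := Measure.integral_comp_mul_left (fun x : ℝ => (1 + x ^ 2)⁻¹) T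
      simp only [div_eq_mul_inv]
      rw [integral_const_mul, h, integral_univ_inv_one_add_sq, abs_of_pos (inv_pos.mpr hT),
        smul_eq_mul, ← mul_assoc, mul_inv_cancel₀ hT.ne', one_mul]
    calc _ ≤ ∫⁻ x, ENNReal.ofReal (T / (1 + (T * (x - y)) ^ 2)) := setLIntegral_le_lintegral _ _
      _ = ENNReal.ofReal Real.pi := by
          rw [← hv, ofReal_integral_eq_lintegral_ofReal hi]
          exact Filter.Eventually.of_forall fun x => by positivity
      _ ≤ _ := ENNReal.ofReal_le_ofReal (by linarith [Real.pi_le_four])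
  · have hset : {x : ℝ | |x - a| ≤ 2 * L} = Set.Icc (a - 2 * L) (a + 2 * L) := by
      ext x
      simp only [Set.mem_ofPred_eq, Set.mem_Icc, abs_le]
      constructor <;> rintro ⟨h1, h2⟩ <;> constructor <;> linarith
    calc _ ≤ ∫⁻ x in {x : ℝ | |x - a| ≤ 2 * L}, ENNReal.ofReal T := by
          refine lintegral_mono fun x => ENNReal.ofReal_le_ofReal ?_
          apply div_le_self hT.le
          nlinarith [sq_nonneg (T * (x - y))]
      _ = ENNReal.ofReal (4 * (T * L)) := by
          rw [setLIntegral_const, hset, Real.volume_Icc, ← ENNReal.ofReal_mul hT.le]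
          congr 1
          ring

/-- The action of the convolution kernel from modulation `L'` to modulation `L`, at a fixed spatial
frequency; `c` is the value of the dispersion relation there. -/
theorem slice_bound {χ : ℝ → ℝ} (hχ : Continuous χ) (h0 : ∀ t, 0 ≤ χ t) (h1 : ∀ t, χ t ≤ 1)
    (hsupp : Function.support χ ⊆ Set.Ioo (-2) 2) (hone : ∀ t ∈ Set.Icc (-1 : ℝ) 1, χ t = 1)
    {C T L L' : ℝ} (hC : 0 < C) (hT : 0 < T) (hL : 0 < L) (hL' : 0 < L') (c : ℝ)
    (G : ℝ → ℝ≥0∞) (hG : Measurable G) :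
    ∫⁻ τ, (‖phiCutD χ L (τ - c)‖ₑ * ∫⁻ σ, ENNReal.ofReal (C * T / (1 + (T * (τ - σ)) ^ 2) ^ 2) *
        (‖phiCutD χ L' (σ - c)‖ₑ * G σ)) ^ 2 ≤
      ENNReal.ofReal (64 * C * interaction (T * L) (T * L')) ^ 2 *
        ∫⁻ σ, (‖phiCutD χ L' (σ - c)‖ₑ * G σ) ^ 2 := by
  set R := offDiag (T * L) (T * L') with hR
  have hR0 : 0 ≤ R := offDiag_nonneg _ _
  set E : Set ℝ := {x : ℝ | |x - c| ≤ 2 * L}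
  set F : Set ℝ := {x : ℝ | |x - c| ≤ 2 * L'}
  have hE : MeasurableSet E := measurableSet_le (by fun_prop) (by fun_prop)
  have hF : MeasurableSet F := measurableSet_le (by fun_prop) (by fun_prop)
  set J : ℝ → ℝ≥0∞ := fun x => ENNReal.ofReal (T / (1 + (T * x) ^ 2)) with hJ
  have hJm : Measurable J := by fun_prop
  set k : ℝ → ℝ → ℝ≥0∞ := fun τ σ =>
    ENNReal.ofReal (16 * C * R) * (E.indicator 1 τ * (F.indicator 1 σ * J (τ - σ))) with hk
  have hkm : Measurable (Function.uncurry k) := by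
    refine Measurable.const_mul ?_ _
    refine Measurable.mul ((measurable_const.indicator hE).comp measurable_fst) ?_
    refine Measurable.mul ((measurable_const.indicator hF).comp measurable_snd) ?_
    exact hJm.comp (measurable_fst.sub measurable_snd)
  have hind : ∀ (S : Set ℝ), MeasurableSet S → ∀ h : ℝ → ℝ≥0∞,
      ∫⁻ x, S.indicator 1 x * h x = ∫⁻ x in S, h x := by
    intro S hS h
    rw [← lintegral_indicator hS]
    refine lintegral_congr fun x => ?_
    by_cases hx : x ∈ S <;> simp [hx]
  have hle1 : ∀ (S : Set ℝ) (x : ℝ), S.indicator (1 : ℝ → ℝ≥0∞) x ≤ 1 := by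
    intro S x
    by_cases hx : x ∈ S <;> simp [hx]
  have hA : ∀ τ, ∫⁻ σ, k τ σ ≤ ENNReal.ofReal (64 * C * R * min 1 (T * L')) := by
    intro τ
    calc ∫⁻ σ, k τ σ ≤ ∫⁻ σ, ENNReal.ofReal (16 * C * R) * (F.indicator 1 σ * J (τ - σ)) := by
          refine lintegral_mono fun σ => ?_
          simp only [hk]
          exact mul_le_mul' le_rfl (mul_le_of_le_one_left zero_le (hle1 _ _))
      _ = ENNReal.ofReal (16 * C * R) * ∫⁻ σ in F, J (τ - σ) := by
          rw [lintegral_const_mul' _ _ ENNReal.ofReal_ne_top, hind F hF]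
      _ ≤ ENNReal.ofReal (16 * C * R) * ENNReal.ofReal (4 * min 1 (T * L')) := by
          gcongr
          have hsymm : ∀ σ, J (τ - σ) = ENNReal.ofReal (T / (1 + (T * (σ - τ)) ^ 2)) := by
            intro σ
            simp only [hJ]
            congr 3
            ring
          simp only [hsymm]
          exact setLIntegral_kernel_le hT c τ
      _ = _ := by
          rw [← ENNReal.ofReal_mul (by positivity)]
          congr 1
          ring
  have hB : ∀ σ, ∫⁻ τ, k τ σ ≤ ENNReal.ofReal (64 * C * R * min 1 (T * L)) := by
    intro σ
    calc ∫⁻ τ, k τ σ ≤ ∫⁻ τ, ENNReal.ofReal (16 * C * R) * (E.indicator 1 τ * J (τ - σ)) := by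
          refine lintegral_mono fun τ => ?_
          simp only [hk]
          refine mul_le_mul' le_rfl (mul_le_mul' le_rfl ?_)
          exact mul_le_of_le_one_left zero_le (hle1 _ _)
      _ = ENNReal.ofReal (16 * C * R) * ∫⁻ τ in E, J (τ - σ) := by
          rw [lintegral_const_mul' _ _ ENNReal.ofReal_ne_top, hind E hE]
      _ ≤ ENNReal.ofReal (16 * C * R) * ENNReal.ofReal (4 * min 1 (T * L)) := by
          gcongr
          exact setLIntegral_kernel_le hT c σ
      _ = _ := by
          rw [← ENNReal.ofReal_mul (by positivity)]
          congr 1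
          ring
  have hpt : ∀ τ σ, ‖phiCutD χ L (τ - c)‖ₑ *
      (ENNReal.ofReal (C * T / (1 + (T * (τ - σ)) ^ 2) ^ 2) * (‖phiCutD χ L' (σ - c)‖ₑ * G σ)) ≤
      k τ σ * (‖phiCutD χ L' (σ - c)‖ₑ * G σ) := by
    intro τ σ
    by_cases hτ : phiCutD χ L (τ - c) = 0
    · simp [hτ]
    by_cases hσ : phiCutD χ L' (σ - c) = 0
    · simp [hσ]
    obtain ⟨a1, a2⟩ := phiCutD_support hsupp hone hL hτ
    obtain ⟨b1, b2⟩ := phiCutD_support hsupp hone hL' hσ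
    have hτE : τ ∈ E := a2
    have hσF : σ ∈ F := b2
    rw [← mul_assoc]
    gcongr
    simp only [hk, hJ, Set.indicator_of_mem hτE, Set.indicator_of_mem hσF, Pi.one_apply, one_mul]
    rw [← ENNReal.ofReal_mul (by positivity)]
    refine (mul_le_of_le_one_left zero_le (enorm_phiCutD_le_one h0 h1 _ _)).trans ?_
    refine ENNReal.ofReal_le_ofReal ?_
    have hd : 1 / (1 + (T * (τ - σ)) ^ 2) ≤ 16 * R := by
      rw [hR, offDiag]
      split_ifs with hpq
      · -- The two windows are separated by at least `L / 4`.
        have hsep : L / 4 ≤ |τ - σ| := by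
          have t1 : |τ - c| ≤ |τ - σ| + |σ - c| := abs_sub_le _ _ _
          have t2 : 8 * L' ≤ L := by
            by_contra hcon
            have := mul_lt_mul_of_pos_left (not_le.mp hcon) hT
            linarith
          linarith
        have hsq : (T * L) ^ 2 / 16 ≤ (T * (τ - σ)) ^ 2 := by
          have : (L / 4) ^ 2 ≤ (τ - σ) ^ 2 := by
            rw [← sq_abs (τ - σ)]
            gcongr
          rw [mul_pow, mul_pow]
          nlinarith [mul_le_mul_of_nonneg_left this (sq_nonneg T)]
        rw [mul_one_div, div_le_div_iff₀ (by positivity) (by positivity)]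
        nlinarith
      · rw [div_le_iff₀ (by positivity)]
        nlinarith [sq_nonneg (T * (τ - σ))]
    calc C * T / (1 + (T * (τ - σ)) ^ 2) ^ 2
        = C * (T / (1 + (T * (τ - σ)) ^ 2)) * (1 / (1 + (T * (τ - σ)) ^ 2)) := by
          field_simp
      _ ≤ C * (T / (1 + (T * (τ - σ)) ^ 2)) * (16 * R) := by gcongr
      _ = _ := by ring
  have hgm : Measurable (fun σ => ‖phiCutD χ L' (σ - c)‖ₑ * G σ) :=
    (((continuous_phiCutD hχ L').measurable.comp (measurable_id.sub_const c)).enorm).mul hG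
  calc _ ≤ ∫⁻ τ, (∫⁻ σ, k τ σ * (‖phiCutD χ L' (σ - c)‖ₑ * G σ)) ^ 2 := by
        refine lintegral_mono fun τ => ?_
        gcongr
        rw [← lintegral_const_mul' _ _ enorm_ne_top]
        exact lintegral_mono (hpt τ)
    _ ≤ _ := schur_test k hkm _ _ hA hB _ hgm
    _ = _ := by
        congr 1
        have hp : 0 ≤ min 1 (T * L) := by positivity
        have hq : 0 ≤ min 1 (T * L') := by positivity
        rw [← ENNReal.ofReal_mul (by positivity), ← ENNReal.ofReal_pow
          (mul_nonneg (by positivity) (interaction_nonneg _ _)), interaction, ← hR]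
        congr 1
        rw [mul_pow, mul_pow, mul_pow, mul_pow, Real.sq_sqrt hp, Real.sq_sqrt hq]
        ring

/-- The norm of a dyadic piece, in terms of extended nonnegative norms. -/
theorem PQLnorm_eq (χ : ℝ → ℝ) (N M L : ℝ) (w : ℝ → ℝ → ℝ → ℂ) :
    PQLnorm χ N M L w = (∫⁻ v : ℝ × ℝ × ℝ,
      (‖phiCutD χ N (Real.sqrt (v.2.1 ^ 2 + v.2.2 ^ 2)) * phiCutD χ M (v.2.1 + v.2.2)‖ₑ *
        (‖phiCutD χ L (v.1 - (v.2.1 ^ 3 + v.2.2 ^ 3))‖ₑ *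
          ‖ftt w v.1 v.2.1 v.2.2‖ₑ)) ^ 2) ^ ((1 : ℝ) / 2) := by
  unfold PQLnorm
  congr 1
  refine lintegral_congr fun v => ?_
  rw [sub_sub, ← mul_assoc, ← enorm_mul, ← ofReal_norm, ← ofReal_norm,
    ← ENNReal.ofReal_mul (norm_nonneg _), ← ENNReal.ofReal_pow (by positivity),
    mul_pow (‖_‖), Real.norm_eq_abs, sq_abs]

/-- The output piece of modulation `L` is controlled by all input pieces at the same spatial
frequencies, since a cutoff in time only moves the time frequency. -/
theorem PQLnorm_cutoff_le {χ : ℝ → ℝ} (hχ : Continuous χ) (h0 : ∀ t, 0 ≤ χ t)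
    (h1 : ∀ t, χ t ≤ 1) (hsupp : Function.support χ ⊆ Set.Ioo (-2) 2)
    (hone : ∀ t ∈ Set.Icc (-1 : ℝ) 1, χ t = 1) {C T L : ℝ} (hC : 0 < C) (hT : 0 < T) (hL : 0 < L)
    (u : SchwartzMap (ℝ × ℝ × ℝ) ℂ) (θ κ : ℝ → ℂ) (hκ : Integrable κ)
    (hκC : ∀ ω, ‖κ ω‖ ≤ C * T / (1 + (T * ω) ^ 2) ^ 2)
    (hθ : ∀ t, θ t = ∫ ω, Complex.exp (Complex.I * ((ω * t : ℝ) : ℂ)) * κ ω) (N M : ℝ) :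
    PQLnorm χ N M L (fun t x y => θ t * u (t, x, y)) ≤
      ∑' l : ℤ, ENNReal.ofReal (64 * C * interaction (T * L) (T * 2 ^ l)) *
        PQLnorm χ N M (2 ^ l) (fun t x y => u (t, x, y)) := by
  set W : ℝ × ℝ → ℝ≥0∞ := fun z =>
    ‖phiCutD χ N (Real.sqrt (z.1 ^ 2 + z.2 ^ 2)) * phiCutD χ M (z.1 + z.2)‖ₑ with hW
  set c : ℝ × ℝ → ℝ := fun z => z.1 ^ 3 + z.2 ^ 3 with hc
  set U : ℝ × ℝ × ℝ → ℝ≥0∞ := fun v => ‖ftt (fun t x y => u (t, x, y)) v.1 v.2.1 v.2.2‖ₑ with hU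
  set K : ℝ → ℝ≥0∞ := fun x => ENNReal.ofReal (C * T / (1 + (T * x) ^ 2) ^ 2) with hK
  have hφ := fun L => (continuous_phiCutD hχ L).measurable
  have hWm : Measurable W := by
    have hN := hφ N
    have hM := hφ M
    fun_prop
  have hcm : Measurable c := by fun_prop
  have hUm : Measurable U := (measurable_ftt u).enorm
  have hKm : Measurable K := by fun_prop
  -- The contribution of the input modulation `2 ^ l`.
  set f : ℤ → ℝ × ℝ × ℝ → ℝ≥0∞ := fun l v => W v.2 * (‖phiCutD χ L (v.1 - c v.2)‖ₑ *
    ∫⁻ σ, K (v.1 - σ) * (‖phiCutD χ (2 ^ l) (σ - c v.2)‖ₑ * U (σ, v.2))) with hf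
  have hin : ∀ l : ℤ, Measurable (fun p : (ℝ × ℝ × ℝ) × ℝ =>
      K (p.1.1 - p.2) * (‖phiCutD χ (2 ^ l) (p.2 - c p.1.2)‖ₑ * U (p.2, p.1.2))) := by
    intro l
    have := hφ (2 ^ l)
    fun_prop
  have hfm : ∀ l, Measurable (f l) := by
    intro l
    have h2 := hφ L
    have h3 : Measurable (fun v : ℝ × ℝ × ℝ =>
      ∫⁻ σ, K (v.1 - σ) * (‖phiCutD χ (2 ^ l) (σ - c v.2)‖ₑ * U (σ, v.2))) :=
      (hin l).lintegral_prod_right'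
    fun_prop
  have hpt : ∀ v : ℝ × ℝ × ℝ, W v.2 * (‖phiCutD χ L (v.1 - c v.2)‖ₑ *
      ‖ftt (fun t x y => θ t * u (t, x, y)) v.1 v.2.1 v.2.2‖ₑ) ≤ ∑' l, f l v := by
    intro v
    simp only [hf]
    rw [ENNReal.tsum_mul_left, ENNReal.tsum_mul_left]
    refine mul_le_mul' le_rfl (mul_le_mul' le_rfl ?_)
    calc ‖ftt (fun t x y => θ t * u (t, x, y)) v.1 v.2.1 v.2.2‖ₑ
        ≤ ∫⁻ σ, ‖κ (v.1 - σ)‖ₑ * U (σ, v.2) := enorm_ftt_mul_le u θ κ hκ hθ _ _ _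
      _ ≤ ∫⁻ σ, ∑' l : ℤ, K (v.1 - σ) * (‖phiCutD χ (2 ^ l) (σ - c v.2)‖ₑ * U (σ, v.2)) := by
          -- The cutoffs cover every `σ` off the characteristic surface, a null set.
          have hae : ∀ᵐ σ : ℝ, σ ≠ c v.2 := by simp [ae_iff]
          refine lintegral_mono_ae (hae.mono fun σ hσ => ?_)
          rw [ENNReal.tsum_mul_left, ENNReal.tsum_mul_right]
          have hk : ‖κ (v.1 - σ)‖ₑ ≤ K (v.1 - σ) := by
            rw [← ofReal_norm]
            exact ENNReal.ofReal_le_ofReal (hκC _)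
          refine mul_le_mul' hk ?_
          exact le_mul_of_one_le_left zero_le (one_le_tsum_phiCutD hsupp hone (sub_ne_zero.mpr hσ))
      _ = _ := by
          refine lintegral_tsum fun l => ?_
          exact ((hin l).comp measurable_prodMk_left).aemeasurable
  have hterm : ∀ l : ℤ, (∫⁻ v, f l v ^ 2) ^ ((1 : ℝ) / 2) ≤
      ENNReal.ofReal (64 * C * interaction (T * L) (T * 2 ^ l)) *
        PQLnorm χ N M (2 ^ l) (fun t x y => u (t, x, y)) := by
    intro l
    rw [PQLnorm_eq]
    set B := ENNReal.ofReal (64 * C * interaction (T * L) (T * 2 ^ l)) with hB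
    have hg : Measurable (fun v : ℝ × ℝ × ℝ =>
        (W v.2 * (‖phiCutD χ (2 ^ l) (v.1 - c v.2)‖ₑ * U v)) ^ 2) := by
      have := hφ (2 ^ l)
      fun_prop
    have key : ∫⁻ v, f l v ^ 2 ≤
        B ^ 2 * ∫⁻ v, (W v.2 * (‖phiCutD χ (2 ^ l) (v.1 - c v.2)‖ₑ * U v)) ^ 2 := by
      rw [Measure.volume_eq_prod, lintegral_prod_symm' _ ((hfm l).pow_const 2),
        lintegral_prod_symm' _ hg, ← lintegral_const_mul _ hg.lintegral_prod_left']
      refine lintegral_mono fun z => ?_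
      simp only [hf, mul_pow (W z)]
      rw [lintegral_const_mul' _ _ (ENNReal.pow_ne_top enorm_ne_top),
        lintegral_const_mul' _ _ (ENNReal.pow_ne_top enorm_ne_top), mul_left_comm]
      gcongr
      exact slice_bound hχ h0 h1 hsupp hone hC hT hL (by positivity) (c z) (fun σ => U (σ, z))
        (hUm.comp measurable_prodMk_right)
    calc _ ≤ (B ^ 2 * ∫⁻ v, (W v.2 * (‖phiCutD χ (2 ^ l) (v.1 - c v.2)‖ₑ * U v)) ^ 2) ^
          ((1 : ℝ) / 2) := ENNReal.rpow_le_rpow key (by norm_num)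
      _ = _ := by
          rw [ENNReal.mul_rpow_of_nonneg _ _ (by norm_num), sq_rpow_half]
  rw [PQLnorm_eq]
  calc _ ≤ (∫⁻ v, (∑' l, f l v) ^ 2) ^ ((1 : ℝ) / 2) := by
        refine ENNReal.rpow_le_rpow (lintegral_mono fun v => ?_) (by norm_num)
        exact pow_le_pow_left₀ zero_le (hpt v) 2
    _ ≤ ∑' l, (∫⁻ v, f l v ^ 2) ^ ((1 : ℝ) / 2) := lintegral_tsum_sq_rpow_le _ f hfm
    _ ≤ _ := ENNReal.tsum_le_tsum hterm

/-! ### Summation over modulations -/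

theorem tsum_min_rpow_le {ε : ℝ} (hε : 0 < ε) :
    ∃ S : ℝ, 0 < S ∧ ∀ T : ℝ, 0 < T →
      ∑' l : ℤ, ENNReal.ofReal (min ((T * 2 ^ l) ^ ε) ((T * 2 ^ l) ^ (-ε))) ≤
        ENNReal.ofReal S := by
  set r : ℝ := (2 : ℝ) ^ (-ε) with hr
  have hr0 : 0 < r := by positivity
  have hr1 : r < 1 := Real.rpow_lt_one_of_one_lt_of_neg (by norm_num) (by linarith)
  have hsum : Summable (fun m : ℤ => (2 : ℝ) ^ ε * r ^ m.natAbs) := by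
    refine Summable.mul_left _ (Summable.of_nat_of_neg ?_ ?_)
    · simpa using summable_geometric_of_lt_one hr0.le hr1
    · simpa using summable_geometric_of_lt_one hr0.le hr1
  have hnn : ∀ m : ℤ, 0 ≤ (2 : ℝ) ^ ε * r ^ m.natAbs := fun m => by positivity
  refine ⟨(∑' m : ℤ, (2 : ℝ) ^ ε * r ^ m.natAbs) + 1,
    add_pos_of_nonneg_of_pos (tsum_nonneg hnn) one_pos, fun T hT => ?_⟩
  obtain ⟨j, hj1, hj2⟩ := exists_mem_Ico_zpow hT (by norm_num : (1 : ℝ) < 2)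
  calc _ ≤ ∑' l : ℤ, ENNReal.ofReal ((2 : ℝ) ^ ε * r ^ (l + j).natAbs) := by
        refine ENNReal.tsum_le_tsum fun l => ENNReal.ofReal_le_ofReal ?_
        have hlo : (2 : ℝ) ^ (l + j) ≤ T * 2 ^ l := by
          rw [zpow_add₀ (by norm_num), mul_comm]
          gcongr
        have hhi : T * 2 ^ l ≤ (2 : ℝ) ^ (l + j) * 2 := by
          rw [zpow_add_one₀ (by norm_num)] at hj2
          calc T * 2 ^ l ≤ (2 ^ j * 2) * 2 ^ l := by gcongr
            _ = _ := by rw [zpow_add₀ (by norm_num)]; ring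
        have h2ε : (1 : ℝ) ≤ 2 ^ ε := Real.one_le_rpow (by norm_num) hε.le
        rcases le_or_gt 0 (l + j) with h | h
        · refine (min_le_right _ _).trans ?_
          have e : ((2 : ℝ) ^ (l + j)) ^ (-ε) = r ^ (l + j).natAbs := by
            obtain ⟨k, hk⟩ := Int.eq_ofNat_of_zero_le h
            rw [hk, Int.natAbs_natCast, zpow_natCast, hr, ← Real.rpow_natCast, ← Real.rpow_natCast,
              ← Real.rpow_mul (by norm_num), ← Real.rpow_mul (by norm_num), mul_comm]
          calc (T * 2 ^ l) ^ (-ε) ≤ ((2 : ℝ) ^ (l + j)) ^ (-ε) :=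
                Real.rpow_le_rpow_of_nonpos (by positivity) hlo (by linarith)
            _ = r ^ (l + j).natAbs := e
            _ ≤ _ := le_mul_of_one_le_left (by positivity) h2ε
        · refine (min_le_left _ _).trans ?_
          have e : ((2 : ℝ) ^ (l + j)) ^ ε = r ^ (l + j).natAbs := by
            obtain ⟨k, hk⟩ := Int.eq_ofNat_of_zero_le (neg_nonneg.mpr h.le)
            have hk' : l + j = -(k : ℤ) := by omega
            rw [hk', Int.natAbs_neg, Int.natAbs_natCast, hr, ← Real.rpow_intCast,
              ← Real.rpow_natCast, ← Real.rpow_mul (by norm_num), ← Real.rpow_mul (by norm_num)]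
            congr 1
            push_cast
            ring
          calc (T * 2 ^ l) ^ ε ≤ ((2 : ℝ) ^ (l + j) * 2) ^ ε := by gcongr
            _ = (2 : ℝ) ^ ε * r ^ (l + j).natAbs := by
                rw [Real.mul_rpow (by positivity) (by norm_num), e, mul_comm]
    _ = ∑' m : ℤ, ENNReal.ofReal ((2 : ℝ) ^ ε * r ^ m.natAbs) :=
        (Equiv.addRight j).tsum_eq (fun m : ℤ => ENNReal.ofReal ((2 : ℝ) ^ ε * r ^ m.natAbs))
    _ = ENNReal.ofReal (∑' m : ℤ, (2 : ℝ) ^ ε * r ^ m.natAbs) :=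
        (ENNReal.ofReal_tsum_of_nonneg hnn hsum).symm
    _ ≤ _ := ENNReal.ofReal_le_ofReal (by linarith)

theorem sqrt_min_le_rpow {q a : ℝ} (hq : 0 < q) (ha0 : 0 ≤ a) (ha1 : a ≤ 1 / 2) :
    Real.sqrt (min 1 q) ≤ q ^ a := by
  rcases le_total q 1 with h | h
  · rw [min_eq_right h, Real.sqrt_eq_rpow]
    exact Real.rpow_le_rpow_of_exponent_ge hq h ha1
  · rw [min_eq_left h, Real.sqrt_one]
    exact Real.one_le_rpow h ha0

theorem rpow_le_one_add_sq {p a : ℝ} (hp : 0 < p) (ha0 : 0 ≤ a) (ha1 : a ≤ 2) :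
    p ^ a ≤ 1 + p ^ 2 := by
  rcases le_total p 1 with h | h
  · have := Real.rpow_le_one hp.le h ha0
    nlinarith [sq_nonneg p]
  · have := Real.rpow_le_rpow_of_exponent_le h ha1
    rw [Real.rpow_two] at this
    linarith

/-- The factor `min (p ^ (θ/2)) (p ^ (-θ/2))` makes the bound summable over dyadic `p`, uniformly
in `q`. -/
theorem rpow_mul_interaction_le {θ c p q : ℝ} (hθ : 0 < θ) (hc0 : 0 ≤ c) (hc : c + θ ≤ 1 / 2)
    (hp : 0 < p) (hq : 0 < q) :
    p ^ c * interaction p q ≤ 8 * q ^ (c + θ) * min (p ^ (θ / 2)) (p ^ (-(θ / 2))) := by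
  have hs1 : Real.sqrt (min 1 p) ≤ 1 := by
    simp
  have hs0 := Real.sqrt_nonneg (min 1 p)
  unfold interaction offDiag
  split_ifs with h
  · have hq' : Real.sqrt (min 1 q) ≤ q ^ (c + θ) := sqrt_min_le_rpow hq (by linarith) hc
    have hm : p ^ c * (1 / (1 + p ^ 2) * Real.sqrt (min 1 p)) ≤
        min (p ^ (θ / 2)) (p ^ (-(θ / 2))) := by
      refine le_min ?_ ?_
      · have h1 : p ^ c * (1 / (1 + p ^ 2)) ≤ 1 := by
          rw [mul_one_div, div_le_one (by positivity)]
          exact rpow_le_one_add_sq hp hc0 (by linarith)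
        calc p ^ c * (1 / (1 + p ^ 2) * Real.sqrt (min 1 p))
            = p ^ c * (1 / (1 + p ^ 2)) * Real.sqrt (min 1 p) := by ring
          _ ≤ 1 * p ^ (θ / 2) := by
              gcongr
              exact sqrt_min_le_rpow hp (by linarith) (by linarith)
          _ = _ := one_mul _
      · have h1 : p ^ (c + θ / 2) * (1 / (1 + p ^ 2)) ≤ 1 := by
          rw [mul_one_div, div_le_one (by positivity)]
          exact rpow_le_one_add_sq hp (by linarith) (by linarith)
        calc p ^ c * (1 / (1 + p ^ 2) * Real.sqrt (min 1 p))
            ≤ p ^ c * (1 / (1 + p ^ 2) * 1) := by gcongr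
          _ = p ^ (c + θ / 2) * (1 / (1 + p ^ 2)) * p ^ (-(θ / 2)) := by
              rw [Real.rpow_add hp, Real.rpow_neg hp.le]
              field_simp
          _ ≤ 1 * p ^ (-(θ / 2)) := by gcongr
          _ = _ := one_mul _
    calc p ^ c * (1 / (1 + p ^ 2) * Real.sqrt (min 1 p) * Real.sqrt (min 1 q))
        = (p ^ c * (1 / (1 + p ^ 2) * Real.sqrt (min 1 p))) * Real.sqrt (min 1 q) := by ring
      _ ≤ min (p ^ (θ / 2)) (p ^ (-(θ / 2))) * q ^ (c + θ) := by gcongr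
      _ ≤ 8 * (min (p ^ (θ / 2)) (p ^ (-(θ / 2))) * q ^ (c + θ)) :=
          le_mul_of_one_le_left (by positivity) (by norm_num)
      _ = _ := by ring
  · have hpq : p ≤ 8 * q := (not_le.mp h).le
    have hq' : Real.sqrt (min 1 q) ≤ q ^ (θ / 2) := sqrt_min_le_rpow hq (by linarith) (by linarith)
    have hpc : p ^ c ≤ 8 * q ^ (c + θ / 2) * p ^ (-(θ / 2)) := by
      calc p ^ c = p ^ (c + θ / 2) * p ^ (-(θ / 2)) := by
            rw [← Real.rpow_add hp]
            congr 1
            ring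
        _ ≤ (8 * q) ^ (c + θ / 2) * p ^ (-(θ / 2)) := by gcongr
        _ = 8 ^ (c + θ / 2) * q ^ (c + θ / 2) * p ^ (-(θ / 2)) := by
            rw [Real.mul_rpow (by norm_num) hq.le]
        _ ≤ 8 * q ^ (c + θ / 2) * p ^ (-(θ / 2)) := by
            gcongr
            calc (8 : ℝ) ^ (c + θ / 2) ≤ 8 ^ (1 : ℝ) :=
                  Real.rpow_le_rpow_of_exponent_le (by norm_num) (by linarith)
              _ = 8 := Real.rpow_one 8
    have hm : p ^ (-(θ / 2)) * Real.sqrt (min 1 p) ≤ min (p ^ (θ / 2)) (p ^ (-(θ / 2))) := by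
      refine le_min ?_ ?_
      · calc p ^ (-(θ / 2)) * Real.sqrt (min 1 p) ≤ p ^ (-(θ / 2)) * p ^ θ := by
              gcongr
              exact sqrt_min_le_rpow hp hθ.le (by linarith)
          _ = p ^ (θ / 2) := by
              rw [← Real.rpow_add hp]
              congr 1
              ring
      · exact mul_le_of_le_one_right (by positivity) hs1
    have hqq : q ^ (c + θ / 2) * q ^ (θ / 2) = q ^ (c + θ) := by
      rw [← Real.rpow_add hq]
      congr 1
      ring
    calc p ^ c * (1 * Real.sqrt (min 1 p) * Real.sqrt (min 1 q))
        ≤ (8 * q ^ (c + θ / 2) * p ^ (-(θ / 2))) *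
            (1 * Real.sqrt (min 1 p) * q ^ (θ / 2)) := by gcongr
      _ = 8 * (q ^ (c + θ / 2) * q ^ (θ / 2)) * (p ^ (-(θ / 2)) * Real.sqrt (min 1 p)) := by ring
      _ ≤ _ := by
          rw [hqq]
          gcongr

theorem jbr_nonneg (x s : ℝ) : 0 ≤ jbr x s := by unfold jbr; positivity

theorem jbr_le {b A L : ℝ} (hb0 : 0 ≤ b) (hb1 : b ≤ 1) (hA : 0 ≤ A) (hL : 0 ≤ L) :
    jbr (A + L) b ≤ (1 + A) ^ b + L ^ b := by
  calc jbr (A + L) b ≤ ((1 + (A + L)) ^ 2) ^ (b / 2) := by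
        unfold jbr
        gcongr
        nlinarith
    _ = (1 + A + L) ^ b := by
        rw [← Real.rpow_natCast, ← Real.rpow_mul (by positivity), ← add_assoc]
        congr 1
        push_cast
        ring
    _ ≤ _ := Real.rpow_add_le_add_rpow (by positivity) hL hb0 hb1

theorem le_jbr_half {x : ℝ} (hx : 0 ≤ x) : (1 + x) ^ ((1 : ℝ) / 2) ≤ 2 * jbr x (1 / 2) := by
  calc (1 + x) ^ ((1 : ℝ) / 2) = ((1 + x) ^ 2) ^ ((1 : ℝ) / 2 / 2) := by
        rw [← Real.rpow_natCast, ← Real.rpow_mul (by positivity)]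
        congr 1
        norm_num
    _ ≤ (2 * (1 + x ^ 2)) ^ ((1 : ℝ) / 2 / 2) := by
        gcongr
        nlinarith [sq_nonneg (1 - x)]
    _ = 2 ^ ((1 : ℝ) / 2 / 2) * jbr x (1 / 2) := by
        rw [Real.mul_rpow (by norm_num) (by positivity), jbr]
    _ ≤ 2 ^ (1 : ℝ) * jbr x (1 / 2) := by
        have := jbr_nonneg x (1 / 2)
        gcongr <;> norm_num
    _ = _ := by rw [Real.rpow_one]

/-- The weighted entries of the interaction matrix; the scaling `p = T L`, `q = T L'` produces
the gain `T ^ θ`, uniformly in the contribution `A = M²` of the spatial frequency to the weight. -/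
theorem jbr_mul_interaction_le {b θ T A L L' : ℝ} (hb : 0 ≤ b) (hθ : 0 < θ) (hbθ : b + θ = 1 / 2)
    (hT : 0 < T) (hA : 0 ≤ A) (hL : 0 < L) (hL' : 0 < L') :
    jbr (A + L) b * interaction (T * L) (T * L') ≤
      32 * T ^ θ * jbr (A + L') (1 / 2) *
        min ((T * L) ^ (θ / 2)) ((T * L) ^ (-(θ / 2))) := by
  have hi := interaction_nonneg (T * L) (T * L')
  set m := min ((T * L) ^ (θ / 2)) ((T * L) ^ (-(θ / 2))) with hm
  have hm0 : 0 ≤ m := by positivity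
  have hY := le_jbr_half (x := A + L') (by positivity)
  set Y := (1 + (A + L')) ^ ((1 : ℝ) / 2) with hYdef
  have k1 := rpow_mul_interaction_le (c := 0) hθ le_rfl (by linarith)
    (mul_pos hT hL) (mul_pos hT hL')
  have k2 := rpow_mul_interaction_le (c := b) hθ hb hbθ.le (mul_pos hT hL) (mul_pos hT hL')
  rw [Real.rpow_zero, one_mul, zero_add, ← hm] at k1
  rw [hbθ, ← hm] at k2
  have t1 : (1 + A) ^ b * interaction (T * L) (T * L') ≤ 8 * T ^ θ * Y * m := by
    have hw : (1 + A) ^ b * L' ^ θ ≤ Y := by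
      calc (1 + A) ^ b * L' ^ θ ≤ (1 + (A + L')) ^ b * (1 + (A + L')) ^ θ := by
            gcongr <;> linarith
        _ = Y := by rw [← Real.rpow_add (by positivity), hbθ]
    calc (1 + A) ^ b * interaction (T * L) (T * L')
        ≤ (1 + A) ^ b * (8 * (T * L') ^ θ * m) := by gcongr
      _ = 8 * T ^ θ * ((1 + A) ^ b * L' ^ θ) * m := by
          rw [Real.mul_rpow hT.le hL'.le]; ring
      _ ≤ _ := by gcongr
  have t2 : L ^ b * interaction (T * L) (T * L') ≤ 8 * T ^ θ * Y * m := by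
    have hw : L' ^ ((1 : ℝ) / 2) ≤ Y := by
      rw [hYdef]
      gcongr
      linarith
    have hTb : 0 < T ^ b := by positivity
    have e : T ^ b * (L ^ b * interaction (T * L) (T * L')) ≤
        T ^ b * (8 * T ^ θ * L' ^ ((1 : ℝ) / 2) * m) := by
      calc T ^ b * (L ^ b * interaction (T * L) (T * L'))
          = (T * L) ^ b * interaction (T * L) (T * L') := by
            rw [Real.mul_rpow hT.le hL.le]; ring
        _ ≤ _ := k2
        _ = _ := by
            rw [Real.mul_rpow hT.le hL'.le, ← hbθ, Real.rpow_add hT]; ring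
    calc _ ≤ 8 * T ^ θ * L' ^ ((1 : ℝ) / 2) * m := le_of_mul_le_mul_left e hTb
      _ ≤ _ := by gcongr
  calc jbr (A + L) b * interaction (T * L) (T * L')
      ≤ ((1 + A) ^ b + L ^ b) * interaction (T * L) (T * L') := by
        gcongr
        exact jbr_le hb (by linarith) hA hL.le
    _ ≤ 16 * T ^ θ * Y * m := by linarith
    _ ≤ 16 * T ^ θ * (2 * jbr (A + L') (1 / 2)) * m := by gcongr
    _ = _ := by ring

/-- Time-localization gain: for `0 < δ ≤ 1` there are `μ = μ(δ) > 0` and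
`C = C(s,δ,χ,ψ) > 0` such that
`‖ψ(t/T) u‖_{X^{s,(1-δ)/2,1}} ≤ C T^μ ‖u‖_{X^{s,1/2,1}}` for `0 < T ≤ 1`. -/
theorem time_localization (δ : ℝ) (hδ₀ : 0 < δ) (hδ₁ : δ ≤ 1) :
    ∃ μ : ℝ, 0 < μ ∧
      ∀ s : ℝ,
      ∀ χ : ℝ → ℝ, ContDiff ℝ (⊤ : ℕ∞) χ → (∀ t, χ (-t) = χ t) →
        (∀ t, 0 ≤ χ t) → (∀ t, χ t ≤ 1) →
        Function.support χ ⊆ Set.Ioo (-2) 2 →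
        (∀ t ∈ Set.Icc (-1 : ℝ) 1, χ t = 1) →
      ∀ ψ : ℝ → ℝ, ContDiff ℝ (⊤ : ℕ∞) ψ →
        Function.support ψ ⊆ Set.Icc (-2) 2 →
        (∀ t ∈ Set.Icc (-1 : ℝ) 1, ψ t = 1) →
        ∃ C : ℝ, 0 < C ∧
          ∀ T : ℝ, 0 < T → T ≤ 1 →
            ∀ u : SchwartzMap (ℝ × ℝ × ℝ) ℂ,
              Xnorm χ s ((1 - δ) / 2)
                  (fun t x y => (ψ (t / T) : ℂ) * u (t, x, y)) ≤
                ENNReal.ofReal (C * T ^ μ) *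
                  Xnorm χ s (1 / 2) (fun t x y => u (t, x, y)) := by
  refine ⟨δ / 2, by linarith, ?_⟩
  intro s χ hχ _ h0 h1 hsupp hone ψ hψ hψs _
  obtain ⟨C, hC, hdens⟩ := exists_cutoff_density ψ hψ hψs
  obtain ⟨S, hS, hsum⟩ := tsum_min_rpow_le (ε := δ / 2 / 2) (by linarith)
  refine ⟨64 * C * 32 * S, by positivity, fun T hT _ u => ?_⟩
  obtain ⟨κ, hκ, hκC, hθ⟩ := hdens T hT
  set b := (1 - δ) / 2 with hb
  set D := ENNReal.ofReal (64 * C * 32 * S * T ^ (δ / 2)) with hD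
  have hcol : ∀ m l' : ℤ, ∑' l : ℤ, ENNReal.ofReal (jbr (((2 : ℝ) ^ m) ^ 2 + 2 ^ l) b) *
      ENNReal.ofReal (64 * C * interaction (T * 2 ^ l) (T * 2 ^ l')) ≤
      D * ENNReal.ofReal (jbr (((2 : ℝ) ^ m) ^ 2 + 2 ^ l') (1 / 2)) := by
    intro m l'
    set Y := jbr (((2 : ℝ) ^ m) ^ 2 + 2 ^ l') (1 / 2) with hY
    have hY0 : 0 ≤ Y := jbr_nonneg _ _
    calc _ ≤ ∑' l : ℤ, ENNReal.ofReal (64 * C * 32 * T ^ (δ / 2) * Y) *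
          ENNReal.ofReal (min ((T * 2 ^ l) ^ (δ / 2 / 2)) ((T * 2 ^ l) ^ (-(δ / 2 / 2)))) := by
          refine ENNReal.tsum_le_tsum fun l => ?_
          rw [← ENNReal.ofReal_mul (jbr_nonneg _ _), ← ENNReal.ofReal_mul (by positivity)]
          refine ENNReal.ofReal_le_ofReal ?_
          have h := jbr_mul_interaction_le (b := b) (θ := δ / 2) (T := T) (A := ((2 : ℝ) ^ m) ^ 2)
            (L := 2 ^ l) (L' := 2 ^ l') (by rw [hb]; linarith) (by linarith) (by rw [hb]; ring) hT
            (by positivity) (by positivity) (by positivity)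
          calc _ = 64 * C * (jbr (((2 : ℝ) ^ m) ^ 2 + 2 ^ l) b *
                interaction (T * 2 ^ l) (T * 2 ^ l')) := by ring
            _ ≤ 64 * C * _ := mul_le_mul_of_nonneg_left h (by positivity)
            _ = _ := by ring
      _ ≤ ENNReal.ofReal (64 * C * 32 * T ^ (δ / 2) * Y) * ENNReal.ofReal S := by
          rw [ENNReal.tsum_mul_left]
          exact mul_le_mul' le_rfl (hsum T hT)
      _ = _ := by
          rw [hD, ← ENNReal.ofReal_mul (by positivity), ← ENNReal.ofReal_mul (by positivity)]
          congr 1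
          ring
  have hrow : ∀ n m : ℤ, ∑' l : ℤ, ENNReal.ofReal (jbr ((2 : ℝ) ^ n) s *
        jbr (((2 : ℝ) ^ m) ^ 2 + (2 : ℝ) ^ l) b) *
      PQLnorm χ ((2 : ℝ) ^ n) ((2 : ℝ) ^ m) ((2 : ℝ) ^ l)
        (fun t x y => (ψ (t / T) : ℂ) * u (t, x, y)) ≤
      D * ∑' l : ℤ, ENNReal.ofReal (jbr ((2 : ℝ) ^ n) s *
        jbr (((2 : ℝ) ^ m) ^ 2 + (2 : ℝ) ^ l) (1 / 2)) *
      PQLnorm χ ((2 : ℝ) ^ n) ((2 : ℝ) ^ m) ((2 : ℝ) ^ l) (fun t x y => u (t, x, y)) := by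
    intro n m
    set a := ENNReal.ofReal (jbr ((2 : ℝ) ^ n) s) with ha
    set P : ℤ → ℝ≥0∞ := fun l =>
      PQLnorm χ ((2 : ℝ) ^ n) ((2 : ℝ) ^ m) ((2 : ℝ) ^ l) (fun t x y => u (t, x, y)) with hP
    simp only [ENNReal.ofReal_mul (jbr_nonneg ((2 : ℝ) ^ n) s), ← ha]
    calc _ ≤ ∑' l : ℤ, ∑' l' : ℤ, (a * P l') *
          (ENNReal.ofReal (jbr (((2 : ℝ) ^ m) ^ 2 + 2 ^ l) b) *
            ENNReal.ofReal (64 * C * interaction (T * 2 ^ l) (T * 2 ^ l'))) := by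
          refine ENNReal.tsum_le_tsum fun l => ?_
          refine (mul_le_mul' le_rfl (PQLnorm_cutoff_le hχ.continuous h0 h1 hsupp hone hC hT
            (by positivity) u (fun t => (ψ (t / T) : ℂ)) κ hκ hκC hθ _ _)).trans ?_
          rw [← ENNReal.tsum_mul_left]
          refine le_of_eq (tsum_congr fun l' => ?_)
          simp only [hP]
          ring
      _ = ∑' l' : ℤ, (a * P l') * ∑' l : ℤ,
          ENNReal.ofReal (jbr (((2 : ℝ) ^ m) ^ 2 + 2 ^ l) b) *
            ENNReal.ofReal (64 * C * interaction (T * 2 ^ l) (T * 2 ^ l')) := by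
          rw [ENNReal.tsum_comm]
          exact tsum_congr fun l' => ENNReal.tsum_mul_left
      _ ≤ ∑' l' : ℤ, (a * P l') *
          (D * ENNReal.ofReal (jbr (((2 : ℝ) ^ m) ^ 2 + 2 ^ l') (1 / 2))) :=
          ENNReal.tsum_le_tsum fun l' => mul_le_mul' le_rfl (hcol m l')
      _ = _ := by
          rw [← ENNReal.tsum_mul_left]
          refine tsum_congr fun l' => ?_
          simp only [hP]
          ring
  unfold Xnorm
  calc _ ≤ (∑' n : ℤ, ∑' m : ℤ, (D * ∑' l : ℤ, ENNReal.ofReal (jbr ((2 : ℝ) ^ n) s *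
        jbr (((2 : ℝ) ^ m) ^ 2 + (2 : ℝ) ^ l) (1 / 2)) *
      PQLnorm χ ((2 : ℝ) ^ n) ((2 : ℝ) ^ m) ((2 : ℝ) ^ l)
        (fun t x y => u (t, x, y))) ^ 2) ^ ((1 : ℝ) / 2) := by
        refine ENNReal.rpow_le_rpow ?_ (by norm_num)
        exact ENNReal.tsum_le_tsum fun n => ENNReal.tsum_le_tsum fun m =>
          pow_le_pow_left₀ zero_le (hrow n m) 2
    _ = _ := by
        simp only [mul_pow, ENNReal.tsum_mul_left]
        rw [ENNReal.mul_rpow_of_nonneg _ _ (by norm_num), sq_rpow_half]
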